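/- arXiv:2505.17752 — 6 statements merged into one kernel-verified Lean document; each statement's English description precedes it below -/
import Mathlib

section
/- Let λ₁ ≥ μ₁ ≥ ν₁ and λ₂ ≥ μ₂ ≥ ν₂ be real numbers with λ₁ + μ₁ + ν₁ = 0 and λ₂ + μ₂ + ν₂ = 0. Then λ₁λ₂ + μ₁μ₂ + ν₁ν₂ ≥ (1/2)·√(λ₁² + μ₁² + ν₁²)·√(λ₂² + μ₂² + ν₂²). In particular, if (λ₁,μ₁,ν₁) ≠ (0,0,0) and (λ₂,μ₂,ν₂) ≠ (0,0,0), then λ₁λ₂ + μ₁μ₂ + ν₁ν₂ > 0. -/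
/-!
A decreasing triple with zero sum is a combination, with nonnegative coefficients `a = l - m` and
`b = m - n`, of the two extreme rays `(2, -1, -1) / 3` and `(1, 1, -2) / 3`, which meet at angle
`π / 3`. In these coordinates the scalar product is `(2ac + 2bd + ad + bc) / 3`, the squared norm is
`2 (a² + ab + b²) / 3`, and four times the square of the former minus the product of the squared
norms is a polynomial in `a, b, c, d` with nonnegative coefficients (`four_mul_sq_sub`). Strict
positivity follows since both norms are positive when the triples are nonzero.
-/

/-- In the coordinates along the extreme rays, the defect in the squared inequality has only
nonnegative coefficients. -/
lemma four_mul_sq_sub (a b c d : ℝ) :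
    4 * ((2 * a * c + 2 * b * d + a * d + b * c) / 3) ^ 2
        - (2 / 3 * (a ^ 2 + a * b + b ^ 2)) * (2 / 3 * (c ^ 2 + c * d + d ^ 2))
      = 4 / 3 * (a ^ 2 * c ^ 2 + b ^ 2 * d ^ 2 + 3 * (a * b * c * d) + a ^ 2 * c * d
        + a * b * c ^ 2 + a * b * d ^ 2 + b ^ 2 * c * d) := by
  ring

lemma norm_sq_pos_of_ne_zero {l m n : ℝ} (h : (l, m, n) ≠ ((0 : ℝ), (0 : ℝ), (0 : ℝ))) :
    0 < l ^ 2 + m ^ 2 + n ^ 2 := by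
  by_contra hle
  apply h
  have hl : l = 0 := by nlinarith [sq_nonneg l, sq_nonneg m, sq_nonneg n]
  have hm : m = 0 := by nlinarith [sq_nonneg l, sq_nonneg m, sq_nonneg n]
  have hn : n = 0 := by nlinarith [sq_nonneg l, sq_nonneg m, sq_nonneg n]
  rw [hl, hm, hn]

/-- If `(λ₁, μ₁, ν₁)` and `(λ₂, μ₂, ν₂)` are triples of reals in decreasing
order, each summing to zero, then their scalar product is at least half the product of their
Euclidean norms; in particular it is strictly positive when both triples are nonzero. -/
theorem stmt_0 (l₁ m₁ n₁ l₂ m₂ n₂ : ℝ)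
    (h₁ : m₁ ≤ l₁) (h₂ : n₁ ≤ m₁) (h₃ : m₂ ≤ l₂) (h₄ : n₂ ≤ m₂)
    (hs₁ : l₁ + m₁ + n₁ = 0) (hs₂ : l₂ + m₂ + n₂ = 0) :
    (1 / 2) * Real.sqrt (l₁ ^ 2 + m₁ ^ 2 + n₁ ^ 2) * Real.sqrt (l₂ ^ 2 + m₂ ^ 2 + n₂ ^ 2)
        ≤ l₁ * l₂ + m₁ * m₂ + n₁ * n₂ ∧
      ((l₁, m₁, n₁) ≠ ((0 : ℝ), (0 : ℝ), (0 : ℝ)) →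
        (l₂, m₂, n₂) ≠ ((0 : ℝ), (0 : ℝ), (0 : ℝ)) →
          0 < l₁ * l₂ + m₁ * m₂ + n₁ * n₂) := by
  have key : (1 / 2) * Real.sqrt (l₁ ^ 2 + m₁ ^ 2 + n₁ ^ 2)
      * Real.sqrt (l₂ ^ 2 + m₂ ^ 2 + n₂ ^ 2) ≤ l₁ * l₂ + m₁ * m₂ + n₁ * n₂ := by
    obtain ⟨a, ha⟩ : ∃ a, a = l₁ - m₁ := ⟨_, rfl⟩
    obtain ⟨b, hb⟩ : ∃ b, b = m₁ - n₁ := ⟨_, rfl⟩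
    obtain ⟨c, hc⟩ : ∃ c, c = l₂ - m₂ := ⟨_, rfl⟩
    obtain ⟨d, hd⟩ : ∃ d, d = m₂ - n₂ := ⟨_, rfl⟩
    have ha0 : 0 ≤ a := by linarith
    have hb0 : 0 ≤ b := by linarith
    have hc0 : 0 ≤ c := by linarith
    have hd0 : 0 ≤ d := by linarith
    obtain rfl : l₁ = (2 * a + b) / 3 := by linarith
    obtain rfl : m₁ = (b - a) / 3 := by linarith
    obtain rfl : n₁ = -(a + 2 * b) / 3 := by linarith
    obtain rfl : l₂ = (2 * c + d) / 3 := by linarith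
    obtain rfl : m₂ = (d - c) / 3 := by linarith
    obtain rfl : n₂ = -(c + 2 * d) / 3 := by linarith
    have e₁ : ((2 * a + b) / 3) ^ 2 + ((b - a) / 3) ^ 2 + (-(a + 2 * b) / 3) ^ 2
        = 2 / 3 * (a ^ 2 + a * b + b ^ 2) := by ring
    have e₂ : ((2 * c + d) / 3) ^ 2 + ((d - c) / 3) ^ 2 + (-(c + 2 * d) / 3) ^ 2
        = 2 / 3 * (c ^ 2 + c * d + d ^ 2) := by ring
    have e₃ : (2 * a + b) / 3 * ((2 * c + d) / 3) + (b - a) / 3 * ((d - c) / 3)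
        + -(a + 2 * b) / 3 * (-(c + 2 * d) / 3)
        = (2 * a * c + 2 * b * d + a * d + b * c) / 3 := by ring
    rw [e₁, e₂, e₃, mul_assoc, ← Real.sqrt_mul (by positivity)]
    have hdef : 0 ≤ 4 / 3 * (a ^ 2 * c ^ 2 + b ^ 2 * d ^ 2 + 3 * (a * b * c * d)
        + a ^ 2 * c * d + a * b * c ^ 2 + a * b * d ^ 2 + b ^ 2 * c * d) := by positivity
    rw [← four_mul_sq_sub] at hdef
    have hsqrt : Real.sqrt ((2 / 3 * (a ^ 2 + a * b + b ^ 2)) * (2 / 3 * (c ^ 2 + c * d + d ^ 2)))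
        ≤ 2 * ((2 * a * c + 2 * b * d + a * d + b * c) / 3) :=
      Real.sqrt_le_iff.mpr ⟨by positivity, by linarith⟩
    linarith
  refine ⟨key, fun hne₁ hne₂ => lt_of_lt_of_le ?_ key⟩
  have p₁ := Real.sqrt_pos.mpr (norm_sq_pos_of_ne_zero hne₁)
  have p₂ := Real.sqrt_pos.mpr (norm_sq_pos_of_ne_zero hne₂)
  positivity
end

section
/- Let W be a Weyl-type tensor, let m ∈ ℝ, and for indices i, j ∈ Fin 4 define T(m)_{ij} : ℝ⁴ \ {0} → ℝ by T(m)_{ij}(x) = (∑_{k,l} W k i j l · x_k x_l) / |x|^{m+2}. Then the matrix-valued field T(m) is trace-free and divergence-free: for every x ≠ 0, ∑_i T(m)_{ii}(x) = 0, and for every j and every x ≠ 0, ∑_i ∂_i T(m)_{ij}(x) = 0. -/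
/-!
Writing `N i j x = ∑ k l, W k i j l x_k x_l` and `T i j = N i j · (|x|²)^p` with `p = -(m+2)/2`,
the trace vanishes because `∑ i, W k i i l = ∑ i, W i k l i = 0`. In the divergence, the terms where `∂_i`
hits `N` sum `W i i j l` and `W k i j i` over `i`, both zero, and the terms where `∂_i` hits the
radial factor are a multiple of `∑ W k i j l x_k x_i x_l`, which is zero by antisymmetry in `k, i`.
The same proof therefore works for every exponent `m`.
-/

/-- A Weyl-type tensor: a `(0,4)`-tensor on `ℝ⁴` with the algebraic symmetries of the Weyl
curvature tensor (antisymmetry in the first and last pairs, pair-exchange symmetry) and all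
traces vanishing. -/
def IsWeyl (W : Fin 4 → Fin 4 → Fin 4 → Fin 4 → ℝ) : Prop :=
  (∀ k i j l, W k i j l = -(W i k j l)) ∧
  (∀ k i j l, W k i j l = -(W k i l j)) ∧
  (∀ k i j l, W k i j l = W j l k i) ∧
  (∀ i j, ∑ a, W a i j a = 0)

/-- The `i`-th partial derivative of a function on `ℝ⁴`. -/
noncomputable def pd (i : Fin 4) (f : EuclideanSpace ℝ (Fin 4) → ℝ)
    (x : EuclideanSpace ℝ (Fin 4)) : ℝ :=
  fderiv ℝ f x (EuclideanSpace.single i 1)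

/-- The radial factor is written as a power of `‖y‖ ^ 2`, which is smooth with gradient `2x`; this
gives the partial derivative for every real exponent. -/
theorem pd_quot (A : Fin 4 → Fin 4 → ℝ) (m : ℝ) (f : EuclideanSpace ℝ (Fin 4) → ℝ)
    (hf : ∀ x, f x = (∑ k, ∑ l, A k l * x k * x l) / ‖x‖ ^ (m + 2))
    (i : Fin 4) (x : EuclideanSpace ℝ (Fin 4)) (hx : x ≠ 0) :
    pd i f x = (∑ l, A i l * x l + ∑ k, A k i * x k) * (‖x‖ ^ 2) ^ (-(m + 2) / 2)
      + (∑ k, ∑ l, A k l * x k * x l) *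
        (-(m + 2) / 2 * (‖x‖ ^ 2) ^ (-(m + 2) / 2 - 1) * (2 * x i)) := by
  have hfe : f = fun y => (∑ k, ∑ l, A k l * y k * y l) * (‖y‖ ^ 2) ^ (-(m + 2) / 2) := by
    funext y
    rw [hf, div_eq_mul_inv, ← Real.rpow_neg (norm_nonneg y), ← Real.rpow_natCast,
      ← Real.rpow_mul (norm_nonneg y)]
    congr 2
    push_cast
    ring
  have hc : ∀ k : Fin 4, HasFDerivAt (fun y : EuclideanSpace ℝ (Fin 4) => y k)
      (EuclideanSpace.proj k : EuclideanSpace ℝ (Fin 4) →L[ℝ] ℝ) x := fun k =>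
    (EuclideanSpace.proj k : EuclideanSpace ℝ (Fin 4) →L[ℝ] ℝ).hasFDerivAt
  have hN : HasFDerivAt (fun y : EuclideanSpace ℝ (Fin 4) => ∑ k, ∑ l, A k l * y k * y l) _ x :=
    HasFDerivAt.fun_sum fun k _ => HasFDerivAt.fun_sum fun l _ =>
      ((hc k).const_mul (A k l)).mul (hc l)
  have hr := (hasStrictFDerivAt_norm_sq x).hasFDerivAt.rpow_const (p := -(m + 2) / 2)
    (Or.inl (by positivity))
  rw [pd, hfe, (hN.fun_mul hr).fderiv]
  have e1 : ∑ k, ∑ l, (A k l * x k * (if l = i then (1 : ℝ) else 0)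
      + x l * (A k l * (if k = i then (1 : ℝ) else 0)))
      = ∑ l, A i l * x l + ∑ k, A k i * x k := by
    simp [Finset.sum_add_distrib, Finset.sum_ite_irrel, add_comm, mul_comm]
  rw [← e1]
  simp [EuclideanSpace.inner_single_right]
  ring

/-- For a Weyl-type tensor `W` and any `m ∈ ℝ`, the matrix-valued field
`T(m)_{ij}(x) = (∑_{k,l} W k i j l · x_k x_l) / |x|^(m+2)` on `ℝ⁴ \ {0}` is trace-free and
divergence-free. -/
theorem stmt_1 (W : Fin 4 → Fin 4 → Fin 4 → Fin 4 → ℝ) (hW : IsWeyl W) (m : ℝ)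
    (T : Fin 4 → Fin 4 → EuclideanSpace ℝ (Fin 4) → ℝ)
    (hT : ∀ i j x, T i j x = (∑ k, ∑ l, W k i j l * x k * x l) / ‖x‖ ^ (m + 2)) :
    (∀ x : EuclideanSpace ℝ (Fin 4), x ≠ 0 → ∑ i, T i i x = 0) ∧
    (∀ (j : Fin 4) (x : EuclideanSpace ℝ (Fin 4)), x ≠ 0 → ∑ i, pd i (T i j) x = 0) := by
  obtain ⟨h1, h2, -, h4⟩ := hW
  constructor
  · intro x _
    simp_rw [hT]
    rw [← Finset.sum_div, Finset.sum_comm]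
    have : ∀ k, ∑ i, ∑ l, W k i i l * x k * x l = 0 := fun k => by
      rw [Finset.sum_comm]
      refine Finset.sum_eq_zero fun l _ => ?_
      rw [← Finset.sum_mul, ← Finset.sum_mul]
      have : ∑ i, W k i i l = 0 := by
        rw [← h4 k l]
        exact Finset.sum_congr rfl fun i _ => by rw [h1, h2, neg_neg]
      simp [this]
    simp [this]
  · intro j x hx
    rw [Finset.sum_congr rfl fun i _ =>
      pd_quot (fun k l => W k i j l) m (T i j) (hT i j) i x hx, Finset.sum_add_distrib,
      ← Finset.sum_mul, Finset.sum_add_distrib]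
    have a1 : ∑ i, ∑ l, W i i j l * x l = 0 := by
      have : ∀ i l, W i i j l = 0 := fun i l => by linarith [h1 i i j l]
      simp [this]
    have a2 : ∑ i, ∑ k, W k i j i * x k = 0 := by
      rw [Finset.sum_comm]
      refine Finset.sum_eq_zero fun k _ => ?_
      have : ∑ i, W k i j i = 0 := by
        rw [Finset.sum_congr rfl fun i _ => h1 k i j i, Finset.sum_neg_distrib, h4, neg_zero]
      rw [← Finset.sum_mul, this, zero_mul]
    have a3 : ∑ i, (∑ k, ∑ l, W k i j l * x k * x l) * x i = 0 := by
      have h : ∑ i, (∑ k, ∑ l, W k i j l * x k * x l) * x i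
          = -∑ i, (∑ k, ∑ l, W k i j l * x k * x l) * x i := by
        simp_rw [Finset.sum_mul]
        conv_lhs => rw [Finset.sum_comm]
        simp_rw [← Finset.sum_neg_distrib]
        refine Finset.sum_congr rfl fun i _ => Finset.sum_congr rfl fun k _ =>
          Finset.sum_congr rfl fun l _ => ?_
        rw [h1 i k]
        ring
      linarith
    set c := -(m + 2) / 2 * (‖x‖ ^ 2) ^ (-(m + 2) / 2 - 1) with hc
    have a4 : ∑ i, (∑ k, ∑ l, W k i j l * x k * x l) * (c * (2 * x i)) = 0 := by
      rw [← mul_zero (c * 2), ← a3, Finset.mul_sum]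
      exact Finset.sum_congr rfl fun i _ => by ring
    rw [a1, a2, a4]
    simp
end

section
/- Let W be a Weyl-type tensor, let i, j ∈ Fin 4, and let m ∈ {4, 2, −2, −4}. Then the function u : ℝ⁴ \ {0} → ℝ defined by u(x) = (∑_{k,l} W k i j l · x_k x_l) / |x|^{m+2} is biharmonic on ℝ⁴ \ {0}, i.e. Δ²u = 0 there, where Δ is the Euclidean Laplacian ∑_α ∂_α∂_α. -/
/-- The Euclidean Laplacian on `ℝ⁴`: sum of second partial derivatives. -/
noncomputable def lap (f : EuclideanSpace ℝ (Fin 4) → ℝ)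
    (x : EuclideanSpace ℝ (Fin 4)) : ℝ :=
  ∑ α, pd α (pd α f) x

/-- Euclidean `ℝ⁴`. -/
abbrev E4 := EuclideanSpace ℝ (Fin 4)

/-- The quadratic form with matrix `B` (not assumed symmetric). -/
def quad (B : Fin 4 → Fin 4 → ℝ) (x : E4) : ℝ := ∑ k, ∑ l, B k l * x k * x l

/-- The partial derivative `∂_α` of `quad B`. -/
def quadD (B : Fin 4 → Fin 4 → ℝ) (α : Fin 4) (x : E4) : ℝ := ∑ l, (B α l + B l α) * x l

/-- The squared Euclidean norm as a polynomial in the coordinates. -/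
def nsq (x : E4) : ℝ := ∑ k, x k ^ 2

lemma nsq_eq_norm_sq (x : E4) : nsq x = ‖x‖ ^ 2 := by
  simp [nsq, EuclideanSpace.norm_sq_eq]

lemma nsq_ne_zero {x : E4} (hx : x ≠ 0) : nsq x ≠ 0 := by
  rw [nsq_eq_norm_sq]
  exact pow_ne_zero 2 (norm_ne_zero_iff.mpr hx)

/-- `f` is differentiable at `x` with `α`-th partial derivative `d`. Differentiability is recorded
because `pd` has a junk value without it. -/
def HasPd (α : Fin 4) (f : E4 → ℝ) (d : ℝ) (x : E4) : Prop :=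
  DifferentiableAt ℝ f x ∧ pd α f x = d

lemma HasPd.congr_val {α : Fin 4} {f : E4 → ℝ} {d d' : ℝ} {x : E4} (h : HasPd α f d x)
    (e : d = d') : HasPd α f d' x := e ▸ h

lemma HasPd.add {α : Fin 4} {f g : E4 → ℝ} {d e : ℝ} {x : E4} (hf : HasPd α f d x)
    (hg : HasPd α g e x) : HasPd α (fun y => f y + g y) (d + e) x := by
  obtain ⟨hf, rfl⟩ := hf
  obtain ⟨hg, rfl⟩ := hg
  refine ⟨hf.add hg, ?_⟩
  simp only [pd]
  rw [(hf.hasFDerivAt.fun_add hg.hasFDerivAt).fderiv]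
  simp

lemma HasPd.mul {α : Fin 4} {f g : E4 → ℝ} {d e : ℝ} {x : E4} (hf : HasPd α f d x)
    (hg : HasPd α g e x) : HasPd α (fun y => f y * g y) (d * g x + f x * e) x := by
  obtain ⟨hf, rfl⟩ := hf
  obtain ⟨hg, rfl⟩ := hg
  refine ⟨hf.mul hg, ?_⟩
  simp only [pd]
  rw [(hf.hasFDerivAt.fun_mul hg.hasFDerivAt).fderiv]
  simp
  ring

lemma HasPd.sum {α : Fin 4} {f : Fin 4 → E4 → ℝ} {d : Fin 4 → ℝ} {x : E4}
    (h : ∀ k, HasPd α (f k) (d k) x) : HasPd α (fun y => ∑ k, f k y) (∑ k, d k) x := by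
  simp only [Fin.sum_univ_four]
  exact (((h 0).add (h 1)).add (h 2)).add (h 3)

lemma hasPd_const (α : Fin 4) (c : ℝ) (x : E4) : HasPd α (fun _ => c) 0 x :=
  ⟨differentiableAt_const c, by simp [pd]⟩

lemma hasPd_coord (α k : Fin 4) (x : E4) :
    HasPd α (fun y => y k) (if k = α then 1 else 0) x := by
  have h : HasFDerivAt (fun y : E4 => y k)
      (EuclideanSpace.proj k : E4 →L[ℝ] ℝ) x :=
    (EuclideanSpace.proj k : E4 →L[ℝ] ℝ).hasFDerivAt
  refine ⟨h.differentiableAt, ?_⟩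
  simp only [pd]
  rw [h.fderiv]
  simp [Pi.single_apply]

lemma hasPd_quad (B : Fin 4 → Fin 4 → ℝ) (α : Fin 4) (x : E4) :
    HasPd α (quad B) (quadD B α x) x := by
  refine (HasPd.sum fun k => HasPd.sum fun l =>
    ((hasPd_const α (B k l) x).mul (hasPd_coord α k x)).mul (hasPd_coord α l x)).congr_val ?_
  fin_cases α <;> simp [quadD, Fin.sum_univ_four] <;> ring

lemma hasPd_quadD (B : Fin 4 → Fin 4 → ℝ) (α : Fin 4) (x : E4) :
    HasPd α (quadD B α) (2 * B α α) x := by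
  refine (HasPd.sum fun l =>
    (hasPd_const α (B α l + B l α) x).mul (hasPd_coord α l x)).congr_val ?_
  simp
  ring

lemma hasPd_nsq (α : Fin 4) (x : E4) : HasPd α nsq (2 * x α) x := by
  have h := HasPd.sum fun k => (hasPd_coord α k x).mul (hasPd_coord α k x)
  simp only [← pow_two] at h
  refine h.congr_val ?_
  fin_cases α <;> simp [Fin.sum_univ_four] <;> ring

lemma hasPd_nsq_zpow (α : Fin 4) (a : ℤ) {x : E4} (hx : x ≠ 0) :
    HasPd α (fun y => nsq y ^ a) (a * nsq x ^ (a - 1) * (2 * x α)) x := by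
  obtain ⟨hd, hv⟩ := hasPd_nsq α x
  have h := (hasDerivAt_zpow a (nsq x) (Or.inl (nsq_ne_zero hx))).comp_hasFDerivAt x
    hd.hasFDerivAt
  refine ⟨h.differentiableAt, ?_⟩
  rw [← hv]
  simp only [pd]
  erw [h.fderiv]
  simp

/-- Partial derivatives off the origin only depend on values off the origin, which is an open
set. -/
lemma pd_congr {f g : E4 → ℝ} (h : ∀ x, x ≠ 0 → f x = g x) (α : Fin 4) (x : E4) (hx : x ≠ 0) :
    pd α f x = pd α g x := by
  have : f =ᶠ[nhds x] g := by
    filter_upwards [isOpen_ne.mem_nhds hx] with y hy using h y hy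
  simp only [pd]
  rw [this.fderiv_eq]

lemma lap_congr {f g : E4 → ℝ} (h : ∀ x, x ≠ 0 → f x = g x) (x : E4) (hx : x ≠ 0) :
    lap f x = lap g x :=
  Finset.sum_congr rfl fun α _ => pd_congr (pd_congr h α) α x hx

/-- Euler's identity for the quadratic form `quad B`. -/
lemma sum_quadD_mul (B : Fin 4 → Fin 4 → ℝ) (x : E4) :
    ∑ α, quadD B α x * x α = 2 * quad B x := by
  simp only [quadD, quad, Fin.sum_univ_four]
  ring

/-- For a trace-free quadratic form `P` on `ℝ⁴`, `Δ (c P |x|^(2a)) = 4 a (a + 3) c P |x|^(2(a-1))`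
away from the origin. -/
lemma lap_quad_mul_zpow (B : Fin 4 → Fin 4 → ℝ) (hB : ∑ k, B k k = 0) (c : ℝ) (a : ℤ) (x : E4)
    (hx : x ≠ 0) :
    lap (fun y => c * (quad B y * nsq y ^ a)) x
      = 4 * a * (a + 3) * c * (quad B x * nsq x ^ (a - 1)) := by
  have h1 : ∀ α y, y ≠ 0 → pd α (fun y => c * (quad B y * nsq y ^ a)) y
      = c * (quadD B α y * nsq y ^ a + quad B y * (a * nsq y ^ (a - 1) * (2 * y α))) := by
    intro α y hy
    rw [((hasPd_const α c y).mul ((hasPd_quad B α y).mul (hasPd_nsq_zpow α a hy))).2]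
    ring
  have h2 : ∀ α, pd α (pd α (fun y => c * (quad B y * nsq y ^ a))) x
      = c * (2 * nsq x ^ a * B α α + 4 * a * nsq x ^ (a - 1) * (quadD B α x * x α)
        + quad B x * a * (4 * (a - 1) * nsq x ^ (a - 1 - 1) * x α ^ 2
          + 2 * nsq x ^ (a - 1))) := by
    intro α
    rw [pd_congr (h1 α) α x hx,
      ((hasPd_const α c x).mul
        (((hasPd_quadD B α x).mul (hasPd_nsq_zpow α a hx)).add
          ((hasPd_quad B α x).mul
            (((hasPd_const α (a : ℝ) x).mul (hasPd_nsq_zpow α (a - 1) hx)).mul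
              ((hasPd_const α 2 x).mul (hasPd_coord α α x)))))).2]
    push_cast
    simp only [if_true]
    ring
  have h3 : nsq x ^ (a - 1 - 1) * nsq x = nsq x ^ (a - 1) := by
    rw [← zpow_add_one₀ (nsq_ne_zero hx)]
    congr 1
    ring
  have h4 : ∑ α, x α ^ 2 = nsq x := rfl
  simp only [lap, h2]
  rw [← Finset.mul_sum, Finset.sum_add_distrib, Finset.sum_add_distrib, ← Finset.mul_sum,
    ← Finset.mul_sum, ← Finset.mul_sum, Finset.sum_add_distrib, ← Finset.mul_sum, hB,
    sum_quadD_mul, h4]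
  simp only [Finset.sum_const, Finset.card_univ, Fintype.card_fin, nsmul_eq_mul]
  rw [mul_assoc (4 * ((a : ℝ) - 1)), h3]
  push_cast
  ring

/-- For a Weyl-type tensor `W`, indices `i, j`, and `m ∈ {4, 2, −2, −4}`,
the function `u(x) = (∑_{k,l} W k i j l · x_k x_l) / |x|^(m+2)` is biharmonic on
`ℝ⁴ \ {0}`: `Δ²u = 0` there. -/
theorem stmt_3 (W : Fin 4 → Fin 4 → Fin 4 → Fin 4 → ℝ) (hW : IsWeyl W)
    (i j : Fin 4) (m : ℝ) (hm : m ∈ ({4, 2, -2, -4} : Set ℝ))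
    (u : EuclideanSpace ℝ (Fin 4) → ℝ)
    (hu : ∀ x, u x = (∑ k, ∑ l, W k i j l * x k * x l) / ‖x‖ ^ (m + 2)) :
    ∀ x : EuclideanSpace ℝ (Fin 4), x ≠ 0 → lap (lap u) x = 0 := by
  have hB : ∑ k, (fun k l => W k i j l) k k = 0 := hW.2.2.2 i j
  set B : Fin 4 → Fin 4 → ℝ := fun k l => W k i j l
  obtain ⟨a, ham, ha⟩ : ∃ a : ℤ, m + 2 = -(2 * a : ℤ) ∧
      ((a : ℝ) * (a + 3) * (a - 1) * (a + 2) = 0) := by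
    simp only [Set.mem_insert_iff, Set.mem_singleton_iff] at hm
    rcases hm with rfl | rfl | rfl | rfl
    · exact ⟨-3, by norm_num, by norm_num⟩
    · exact ⟨-2, by norm_num, by norm_num⟩
    · exact ⟨0, by norm_num, by norm_num⟩
    · exact ⟨1, by norm_num, by norm_num⟩
  have h0 : ∀ x : E4, x ≠ 0 → u x = 1 * (quad B x * nsq x ^ a) := by
    intro x _
    have hq : quad B x = ∑ k, ∑ l, W k i j l * x k * x l := rfl
    rw [hu, ham, ← Int.cast_neg, Real.rpow_intCast, zpow_neg, div_inv_eq_mul, zpow_mul,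
      nsq_eq_norm_sq, hq, one_mul]
    rfl
  intro x hx
  have h1 : ∀ y : E4, y ≠ 0 →
      lap u y = 4 * a * (a + 3) * 1 * (quad B y * nsq y ^ (a - 1)) := fun y hy => by
    rw [lap_congr h0 y hy, lap_quad_mul_zpow B hB 1 a y hy]
  rw [lap_congr h1 x hx, lap_quad_mul_zpow B hB _ (a - 1) x hx]
  push_cast
  linear_combination 16 * (quad B x * nsq x ^ (a - 1 - 1)) * ha
end

section
/- Let 0 < α < β and let f : (α, β) → ℝ be four times continuously differentiable. Then T(f)(r) = 0 for all r ∈ (α, β) if and only if there exist real constants c₁, c₂, c₃, c₄ such that f(r) = c₁·r⁻⁴ + c₂·r⁻² + c₃·r² + c₄·r⁴ for all r ∈ (α, β). -/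
/-!
With `θ = r · d/dr` one has `r⁴ T = p(θ)`, where
`p(θ) = θ⁴ - 20 θ² + 64 = (θ² - 4)(θ² - 16)`. For each root `k ∈ {-4, -2, 2, 4}` of `p` put
`q_k(θ) = p(θ) / (θ - k)`.

* If `T f = 0`, then `r ^ (-k) · q_k(θ) f` has derivative
  `r ^ (-k - 1) · (θ - k) q_k(θ) f = r ^ (-k - 1) · p(θ) f = 0`, so it is a constant `C_k`
  (`exists_firstIntegral_eq`). Lagrange interpolation, `∑ k, q_k(θ) / p'(k) = 1`, then recovers
  `f = ∑ k, C_k / p'(k) · r ^ k`.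
* Conversely the derivatives of a combination of powers are computed term by term, and `T`
  multiplies `r ^ k` by `p(k) r ^ (-4) = 0`.
-/

/-- The fourth-order radial operator
`T(f)(r) = f⁗(r) + (6/r)·f‴(r) − (13/r²)·f″(r) − (19/r³)·f′(r) + (64/r⁴)·f(r)`. -/
noncomputable def Tf (f : ℝ → ℝ) (r : ℝ) : ℝ :=
  iteratedDeriv 4 f r + (6 / r) * iteratedDeriv 3 f r - (13 / r ^ 2) * iteratedDeriv 2 f r
    - (19 / r ^ 3) * deriv f r + (64 / r ^ 4) * f r

/-- The derivative of `r ↦ r ^ (-k) · q_k(θ) f` for a root `k` of `p(θ) = θ⁴ - 20 θ² + 64`, with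
`q_k(θ) = (θ + k) (θ² - (20 - k²))` expanded in terms of `f₀, …, f₃`, which play the role of `f`
and its first three derivatives. -/
lemma hasDerivAt_firstIntegral (k : ℤ) (hk : (k : ℝ) ^ 2 * (20 - (k : ℝ) ^ 2) = 64)
    {f₀ f₁ f₂ f₃ : ℝ → ℝ} {d r : ℝ} (hr : 0 < r)
    (h₀ : HasDerivAt f₀ (f₁ r) r) (h₁ : HasDerivAt f₁ (f₂ r) r)
    (h₂ : HasDerivAt f₂ (f₃ r) r) (h₃ : HasDerivAt f₃ d r) :
    HasDerivAt (fun x => x ^ (-k) * (x ^ 3 * f₃ x + (3 + k) * (x ^ 2 * f₂ x)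
        + (1 + k - (20 - (k : ℝ) ^ 2)) * (x * f₁ x) - k * (20 - (k : ℝ) ^ 2) * f₀ x))
      (r ^ (-k - 1) * r ^ 4 * (d + (6 / r) * f₃ r - (13 / r ^ 2) * f₂ r
        - (19 / r ^ 3) * f₁ r + (64 / r ^ 4) * f₀ r)) r := by
  have hz := hasDerivAt_zpow (-k) r (Or.inl hr.ne')
  have h := hz.mul (((((hasDerivAt_pow 3 r).mul h₃).add
    (((hasDerivAt_pow 2 r).mul h₂).const_mul (3 + (k : ℝ)))).add
    (((hasDerivAt_id r).mul h₁).const_mul (1 + k - (20 - (k : ℝ) ^ 2)))).sub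
    (h₀.const_mul (k * (20 - (k : ℝ) ^ 2))))
  refine h.congr_deriv ?_
  have hz1 : r ^ (-k) = r ^ (-k - 1) * r := by
    rw [← zpow_add_one₀ hr.ne']; congr 1; ring
  have e : r ^ 4 * (d + (6 / r) * f₃ r - (13 / r ^ 2) * f₂ r
        - (19 / r ^ 3) * f₁ r + (64 / r ^ 4) * f₀ r)
      = r ^ 4 * d + 6 * r ^ 3 * f₃ r - 13 * r ^ 2 * f₂ r - 19 * r * f₁ r + 64 * f₀ r := by
    field_simp
  rw [mul_assoc (r ^ (-k - 1)), e, ← hk]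
  simp only [Pi.mul_apply, Pi.add_apply, Pi.sub_apply, id, hz1]
  push_cast
  ring

/-- The chain of derivatives of a `C⁴` function on an open interval. -/
lemma hasDerivAt_iteratedDeriv_of_contDiffOn {α β : ℝ} {f : ℝ → ℝ}
    (hf : ContDiffOn ℝ 4 f (Set.Ioo α β)) {m : ℕ} (hm : m < 4) {r : ℝ}
    (hr : r ∈ Set.Ioo α β) :
    HasDerivAt (iteratedDeriv m f) (iteratedDeriv (m + 1) f r) r := by
  rw [iteratedDeriv_succ]
  refine DifferentiableAt.hasDerivAt ?_
  have h := hf.differentiableOn_iteratedDerivWithin (m := m) (by exact_mod_cast hm)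
    isOpen_Ioo.uniqueDiffOn
  exact (h.congr fun x hx => (iteratedDerivWithin_of_isOpen isOpen_Ioo hx).symm).differentiableAt
    (isOpen_Ioo.mem_nhds hr)

/-- For a solution of `T f = 0`, the quantity `r ^ (-k) · q_k(θ) f` is constant. -/
lemma exists_firstIntegral_eq {α β : ℝ} (hα : 0 < α) {f : ℝ → ℝ}
    (hf : ContDiffOn ℝ 4 f (Set.Ioo α β)) (hT : ∀ r ∈ Set.Ioo α β, Tf f r = 0)
    (k : ℤ) (hk : (k : ℝ) ^ 2 * (20 - (k : ℝ) ^ 2) = 64) :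
    ∃ C : ℝ, ∀ r ∈ Set.Ioo α β, r ^ 3 * iteratedDeriv 3 f r
        + (3 + k) * (r ^ 2 * iteratedDeriv 2 f r)
        + (1 + k - (20 - (k : ℝ) ^ 2)) * (r * iteratedDeriv 1 f r)
        - k * (20 - (k : ℝ) ^ 2) * iteratedDeriv 0 f r = C * r ^ k := by
  have hd := fun r (hr : r ∈ Set.Ioo α β) => hasDerivAt_firstIntegral k hk (hα.trans hr.1)
    (hasDerivAt_iteratedDeriv_of_contDiffOn hf (m := 0) (by norm_num) hr)
    (hasDerivAt_iteratedDeriv_of_contDiffOn hf (m := 1) (by norm_num) hr)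
    (hasDerivAt_iteratedDeriv_of_contDiffOn hf (m := 2) (by norm_num) hr)
    (hasDerivAt_iteratedDeriv_of_contDiffOn hf (m := 3) (by norm_num) hr)
  obtain ⟨C, hC⟩ := isOpen_Ioo.exists_is_const_of_deriv_eq_zero isPreconnected_Ioo
    (fun r hr => (hd r hr).differentiableAt.differentiableWithinAt)
    (fun r hr => by
      rw [(hd r hr).deriv]
      have h := hT r hr
      simp only [Tf, ← iteratedDeriv_one] at h
      simp only [Nat.reduceAdd, iteratedDeriv_zero, h, mul_zero, Pi.zero_apply, zero_add])
  refine ⟨C, fun r hr => ?_⟩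
  have hr0 : r ≠ 0 := (hα.trans hr.1).ne'
  rw [← hC r hr, mul_right_comm (r ^ (-k)), ← zpow_add₀ hr0]
  simp

/-- If `f` agrees on an open interval of positive reals with a combination of four powers,
its derivative agrees there with the term-by-term derivative. -/
lemma deriv_eq_of_eq_powers {α β : ℝ} (hα : 0 < α) {g : ℝ → ℝ} (a b c d : ℝ) (k l m n : ℤ)
    (hg : ∀ r ∈ Set.Ioo α β, g r = a * r ^ k + b * r ^ l + c * r ^ m + d * r ^ n) :
    ∀ r ∈ Set.Ioo α β, deriv g r = a * k * r ^ (k - 1) + b * l * r ^ (l - 1)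
      + c * m * r ^ (m - 1) + d * n * r ^ (n - 1) := by
  intro r hr
  have hr0 : r ≠ 0 := (hα.trans hr.1).ne'
  have hz := fun j : ℤ => hasDerivAt_zpow j r (Or.inl hr0)
  have h := ((((hz k).const_mul a).add ((hz l).const_mul b)).add ((hz m).const_mul c)).add
    ((hz n).const_mul d)
  have he : g =ᶠ[nhds r] fun r => a * r ^ k + b * r ^ l + c * r ^ m + d * r ^ n :=
    Filter.eventually_of_mem (isOpen_Ioo.mem_nhds hr) hg
  rw [(h.congr_of_eventuallyEq he).deriv]
  ring

/-- For `0 < α < β` and `f` four times continuously differentiable on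
`(α, β)`, one has `T(f) ≡ 0` on `(α, β)` iff
`f(r) = c₁·r⁻⁴ + c₂·r⁻² + c₃·r² + c₄·r⁴` on `(α, β)` for some real constants `c₁,…,c₄`. -/
theorem stmt_5 (α β : ℝ) (hα : 0 < α) (hαβ : α < β) (f : ℝ → ℝ)
    (hf : ContDiffOn ℝ 4 f (Set.Ioo α β)) :
    (∀ r ∈ Set.Ioo α β, Tf f r = 0) ↔
      ∃ c₁ c₂ c₃ c₄ : ℝ, ∀ r ∈ Set.Ioo α β,
        f r = c₁ / r ^ 4 + c₂ / r ^ 2 + c₃ * r ^ 2 + c₄ * r ^ 4 := by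
  constructor
  · intro hT
    obtain ⟨A, hA⟩ := exists_firstIntegral_eq hα hf hT (-4) (by norm_num)
    obtain ⟨B, hB⟩ := exists_firstIntegral_eq hα hf hT (-2) (by norm_num)
    obtain ⟨C, hC⟩ := exists_firstIntegral_eq hα hf hT 2 (by norm_num)
    obtain ⟨D, hD⟩ := exists_firstIntegral_eq hα hf hT 4 (by norm_num)
    -- The weights are `1 / p'(k)`, where `p'(±4) = ±96` and `p'(±2) = ∓48`.
    refine ⟨-A / 96, B / 48, -C / 48, D / 96, fun r hr => ?_⟩
    have hA := hA r hr
    have hB := hB r hr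
    have hC := hC r hr
    have hD := hD r hr
    have e4 : r ^ (-4 : ℤ) = 1 / r ^ 4 := by rw [zpow_neg, one_div]; rfl
    have e2 : r ^ (-2 : ℤ) = 1 / r ^ 2 := by rw [zpow_neg, one_div]; rfl
    have p4 : r ^ (4 : ℤ) = r ^ 4 := rfl
    have p2 : r ^ (2 : ℤ) = r ^ 2 := rfl
    rw [e4] at hA
    rw [e2] at hB
    rw [p2] at hC
    rw [p4] at hD
    push_cast at hA hB hC hD
    rw [iteratedDeriv_zero] at hA hB hC hD
    linear_combination -(1 / 96) * hA + (1 / 48) * hB - (1 / 48) * hC + (1 / 96) * hD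
  · rintro ⟨c₁, c₂, c₃, c₄, h⟩ r hr
    have h0 : ∀ r ∈ Set.Ioo α β, f r = c₁ * r ^ (-4 : ℤ) + c₂ * r ^ (-2 : ℤ)
        + c₃ * r ^ (2 : ℤ) + c₄ * r ^ (4 : ℤ) := by
      intro r hr
      rw [h r hr, zpow_neg, zpow_neg, div_eq_mul_inv, div_eq_mul_inv]
      rfl
    have h1 := deriv_eq_of_eq_powers hα _ _ _ _ _ _ _ _ h0
    have h2 := deriv_eq_of_eq_powers hα _ _ _ _ _ _ _ _ h1
    have h3 := deriv_eq_of_eq_powers hα _ _ _ _ _ _ _ _ h2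
    have h4 := deriv_eq_of_eq_powers hα _ _ _ _ _ _ _ _ h3
    have hr0 : r ≠ 0 := (hα.trans hr.1).ne'
    simp only [Tf, iteratedDeriv_succ, iteratedDeriv_zero]
    rw [h4 r hr, h3 r hr, h2 r hr, h1 r hr, h0 r hr]
    simp only [zpow_sub_one₀ hr0]
    push_cast
    field_simp
    ring
end

section
/- For every γ ∈ (0,1), the matrix A_γ is invertible, i.e. det A_γ ≠ 0. -/
/-! Expanding along complementary `2 × 2` minors of the first two and last two rows gives, with
`x = γ²`, `det A_γ = 4x (1 - 9x² + 16x³ - 9x⁴ + x⁶) = 4x (1 - x)⁴ (1 + 4x + x²)`.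
Every factor is positive for `0 < x < 1`. -/

/-- The matrix `A_γ` of the biharmonic interpolation linear system: its rows are
`(1, γ², γ⁶, γ⁸)`, `(−4, −2γ², 2γ⁶, 4γ⁸)`, `(1, 1, 1, 1)` and `(−4, −2, 2, 4)`. -/
def Agamma (γ : ℝ) : Matrix (Fin 4) (Fin 4) ℝ :=
  !![1, γ ^ 2, γ ^ 6, γ ^ 8;
     -4, -2 * γ ^ 2, 2 * γ ^ 6, 4 * γ ^ 8;
     1, 1, 1, 1;
     -4, -2, 2, 4]

theorem det_Agamma (γ : ℝ) :
    (Agamma γ).det = 4 * γ ^ 2 * (1 - γ ^ 2) ^ 4 * (1 + 4 * γ ^ 2 + γ ^ 4) := by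
  simp [Agamma, Matrix.det_succ_row_zero, Fin.sum_univ_succ, Fin.succAbove]
  ring

/-- For every `γ ∈ (0,1)`, the matrix `A_γ` is invertible:
`det A_γ ≠ 0`. -/
theorem stmt_6 : ∀ γ ∈ Set.Ioo (0 : ℝ) 1, (Agamma γ).det ≠ 0 := by
  rintro γ ⟨h0, h1⟩
  have h : 0 < 1 - γ ^ 2 := by nlinarith
  rw [det_Agamma]
  positivity
end

section
/- Let W be a Weyl-type tensor and let I : ℝ⁴ \ {0} → ℝ⁴ be the inversion I(y) = y/|y|². For z ∈ ℝ⁴ and indices α, β define A_{αβ}(z) := δ_{αβ} − (1/3)·∑_{k,l} W k α β l · z_k z_l. Then for every y ≠ 0 and all indices s, t: |y|⁴ · ∑_{α,β} A_{αβ}(I(y)) · ∂_s I_α(y) · ∂_t I_β(y) = δ_{st} − (1/3)·∑_{k,l} W k s t l · y_k y_l / |y|⁴, where ∂_s I_α denotes the partial derivative of the α-th component of I in the s-th coordinate direction. -/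
/-- The inversion map `I(y) = y / |y|²` on `ℝ⁴ \ {0}` (junk value at `0`). -/
noncomputable def inv4 (y : EuclideanSpace ℝ (Fin 4)) : EuclideanSpace ℝ (Fin 4) :=
  (‖y‖ ^ 2)⁻¹ • y

theorem pd_inv4 (y : EuclideanSpace ℝ (Fin 4)) (hy : y ≠ 0) (s α : Fin 4) :
    pd s (fun z => inv4 z α) y
      = (‖y‖ ^ 2)⁻¹ * ((if s = α then (1 : ℝ) else 0) - 2 * (‖y‖ ^ 2)⁻¹ * y s * y α) := by
  have hn : ‖y‖ ^ 2 ≠ 0 := pow_ne_zero 2 (norm_ne_zero_iff.mpr hy)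
  have h1 : HasFDerivAt (fun z : EuclideanSpace ℝ (Fin 4) => ‖z‖ ^ 2) (2 • innerSL ℝ y) y :=
    (hasStrictFDerivAt_norm_sq y).hasFDerivAt
  have h2 : HasFDerivAt (fun z : EuclideanSpace ℝ (Fin 4) => z α)
      (EuclideanSpace.proj α : EuclideanSpace ℝ (Fin 4) →L[ℝ] ℝ) y :=
    (EuclideanSpace.proj α : EuclideanSpace ℝ (Fin 4) →L[ℝ] ℝ).hasFDerivAt
  have h3 : HasFDerivAt (fun z : EuclideanSpace ℝ (Fin 4) => (‖z‖ ^ 2)⁻¹ * z α) _ y :=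
    ((hasDerivAt_inv hn).comp_hasFDerivAt y h1).mul h2
  have he : (fun z => inv4 z α) = fun z : EuclideanSpace ℝ (Fin 4) => (‖z‖ ^ 2)⁻¹ * z α := by
    funext z
    simp [inv4]
  rw [pd, he, h3.fderiv]
  simp [EuclideanSpace.inner_single_right, PiLp.single_apply, eq_comm (a := α)]
  have hn' := norm_ne_zero_iff.mpr hy
  split_ifs <;> field_simp <;> ring

/-- A form with `y` in both its left and right kernel is unchanged when the basis vectors are
modified by multiples of `y`. -/
theorem sum_reflection_form (Q : Fin 4 → Fin 4 → ℝ) (y : Fin 4 → ℝ)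
    (hl : ∀ β, ∑ α, Q α β * y α = 0) (hr : ∀ α, ∑ β, Q α β * y β = 0)
    (a b : ℝ) (s t : Fin 4) :
    ∑ α, ∑ β, Q α β * ((if s = α then (1 : ℝ) else 0) - a * y α)
      * ((if t = β then (1 : ℝ) else 0) - b * y β) = Q s t := by
  have inner : ∀ α, ∑ β, Q α β * ((if t = β then (1 : ℝ) else 0) - b * y β) = Q α t := by
    intro α
    have : ∑ β, Q α β * (b * y β) = b * ∑ β, Q α β * y β := by
      rw [Finset.mul_sum]
      exact Finset.sum_congr rfl fun β _ => by ring
    simp [mul_sub, Finset.sum_sub_distrib, this, hr]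
  have outer : ∑ α, Q α t * (a * y α) = a * ∑ α, Q α t * y α := by
    rw [Finset.mul_sum]
    exact Finset.sum_congr rfl fun α _ => by ring
  calc _ = ∑ α, Q α t * ((if s = α then (1 : ℝ) else 0) - a * y α) := by
        refine Finset.sum_congr rfl fun α _ => ?_
        rw [← inner α, Finset.sum_mul]
        exact Finset.sum_congr rfl fun β _ => by ring
    _ = Q s t := by simp [mul_sub, Finset.sum_sub_distrib, outer, hl]

/-- The reflection `δ_{sα} - 2 y_s y_α / |y|²` is orthogonal; here `c` stands for `|y|⁻²`. -/
theorem sum_reflection_mul (y : Fin 4 → ℝ) (c : ℝ) (hc : c * ∑ α, y α * y α = 1)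
    (s t : Fin 4) :
    ∑ α, ((if s = α then (1 : ℝ) else 0) - 2 * c * y s * y α)
      * ((if t = α then (1 : ℝ) else 0) - 2 * c * y t * y α) = if s = t then 1 else 0 := by
  have h : ∀ α, ((if s = α then (1 : ℝ) else 0) - 2 * c * y s * y α)
      * ((if t = α then (1 : ℝ) else 0) - 2 * c * y t * y α)
      = (if s = α then (if t = α then (1 : ℝ) else 0) - 2 * c * y t * y α else 0)
        - (if t = α then 2 * c * y s * y α else 0)
        + 4 * c ^ 2 * y s * y t * (y α * y α) := by
    intro α
    split_ifs <;> ring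
  simp only [h, Finset.sum_add_distrib, Finset.sum_sub_distrib, ← Finset.mul_sum,
    Finset.sum_ite_eq, Finset.mem_univ, if_true, eq_comm (a := t) (b := s)]
  linear_combination 4 * c * y s * y t * hc

/-- Contracting two skew indices with the same vector gives zero. -/
theorem sum_skew (B : Fin 4 → Fin 4 → ℝ) (hB : ∀ i j, B i j = -B j i) (y : Fin 4 → ℝ) :
    ∑ i, ∑ j, B i j * y i * y j = 0 := by
  have h : ∑ i, ∑ j, B i j * y i * y j = -∑ i, ∑ j, B i j * y i * y j := by
    conv_lhs => rw [Finset.sum_comm]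
    simp only [← Finset.sum_neg_distrib]
    refine Finset.sum_congr rfl fun i _ => Finset.sum_congr rfl fun j _ => ?_
    rw [hB j i]
    ring
  linarith

/-- For a Weyl-type tensor `W`, the inversion `I(y) = y/|y|²` and the
perturbed Euclidean metric `A_{αβ}(z) = δ_{αβ} − (1/3) ∑ W_{kαβl} z_k z_l`, one has, for
every `y ≠ 0` and all indices `s, t`:
`|y|⁴ ∑_{α,β} A_{αβ}(I(y)) ∂_s I_α(y) ∂_t I_β(y)
  = δ_{st} − (1/3) ∑ W_{kstl} y_k y_l / |y|⁴`. -/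
theorem stmt_12 (W : Fin 4 → Fin 4 → Fin 4 → Fin 4 → ℝ) (hW : IsWeyl W) :
    ∀ y : EuclideanSpace ℝ (Fin 4), y ≠ 0 → ∀ s t : Fin 4,
      ‖y‖ ^ 4 * ∑ α, ∑ β,
          ((if α = β then (1 : ℝ) else 0)
              - (1 / 3) * ∑ k, ∑ l, W k α β l * inv4 y k * inv4 y l)
            * pd s (fun z => inv4 z α) y * pd t (fun z => inv4 z β) y
        = (if s = t then (1 : ℝ) else 0)
            - (1 / 3) * (∑ k, ∑ l, W k s t l * y k * y l) / ‖y‖ ^ 4 := by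
  intro y hy s t
  obtain ⟨hW1, hW2, -, -⟩ := hW
  have hn : ‖y‖ ≠ 0 := norm_ne_zero_iff.mpr hy
  set c : ℝ := (‖y‖ ^ 2)⁻¹ with hcdef
  have hc : c * ∑ α, y α * y α = 1 := by
    have : ∑ α, y α * y α = ‖y‖ ^ 2 := by
      rw [EuclideanSpace.real_norm_sq_eq]
      exact Finset.sum_congr rfl fun α _ => by ring
    rw [this, hcdef, inv_mul_cancel₀ (pow_ne_zero 2 hn)]
  set Q : Fin 4 → Fin 4 → ℝ := fun α β => ∑ k, ∑ l, W k α β l * y k * y l with hQ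
  have hl : ∀ β, ∑ α, Q α β * y α = 0 := by
    intro β
    have h := sum_skew (fun α k => ∑ l, W k α β l * y l)
      (fun α k => by
        rw [← Finset.sum_neg_distrib]
        exact Finset.sum_congr rfl fun l _ => by rw [hW1 k α β l]; ring) y
    rw [← h]
    simp only [hQ, Finset.sum_mul]
    refine Finset.sum_congr rfl fun α _ => Finset.sum_congr rfl fun k _ =>
      Finset.sum_congr rfl fun l _ => by ring
  have hr : ∀ α, ∑ β, Q α β * y β = 0 := by
    intro α
    have h := sum_skew (fun β l => ∑ k, W k α β l * y k)
      (fun β l => by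
        rw [← Finset.sum_neg_distrib]
        exact Finset.sum_congr rfl fun k _ => by rw [hW2 k α β l]; ring) y
    rw [← h]
    simp only [hQ, Finset.sum_mul]
    refine Finset.sum_congr rfl fun β _ => ?_
    rw [Finset.sum_comm]
    refine Finset.sum_congr rfl fun l _ => Finset.sum_congr rfl fun k _ => by ring
  have hI : ∀ α β, ∑ k, ∑ l, W k α β l * inv4 y k * inv4 y l = c ^ 2 * Q α β := by
    intro α β
    simp only [hQ, Finset.mul_sum]
    refine Finset.sum_congr rfl fun k _ => Finset.sum_congr rfl fun l _ => ?_
    simp only [inv4, PiLp.smul_apply, smul_eq_mul, ← hcdef]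
    ring
  have hform := sum_reflection_form Q y hl hr (2 * c * y s) (2 * c * y t) s t
  have horth := sum_reflection_mul y c hc s t
  set u : Fin 4 → ℝ := fun α => (if s = α then (1 : ℝ) else 0) - 2 * c * y s * y α with hu
  set v : Fin 4 → ℝ := fun β => (if t = β then (1 : ℝ) else 0) - 2 * c * y t * y β with hv
  have hform' : ∑ α, ∑ β, Q α β * u α * v β = Q s t := hform
  have horth' : ∑ α, u α * v α = if s = t then 1 else 0 := horth
  have hsum : ∑ α, ∑ β, ((if α = β then (1 : ℝ) else 0) - (1 / 3) * (c ^ 2 * Q α β))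
      * (c * u α) * (c * v β)
      = c ^ 2 * (∑ α, u α * v α) - (1 / 3) * c ^ 4 * ∑ α, ∑ β, Q α β * u α * v β := by
    have hδ : ∀ α, u α * v α = ∑ β, (if α = β then u α * v β else 0) := by
      intro α
      simp
    simp only [hδ, Finset.mul_sum, ← Finset.sum_sub_distrib]
    refine Finset.sum_congr rfl fun α _ => Finset.sum_congr rfl fun β _ => ?_
    split_ifs <;> ring
  have hL : ∀ α β, ((if α = β then (1 : ℝ) else 0)
      - (1 / 3) * ∑ k, ∑ l, W k α β l * inv4 y k * inv4 y l)
        * pd s (fun z => inv4 z α) y * pd t (fun z => inv4 z β) y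
      = ((if α = β then (1 : ℝ) else 0) - (1 / 3) * (c ^ 2 * Q α β))
      * (c * u α) * (c * v β) := by
    intro α β
    rw [hI, pd_inv4 y hy, pd_inv4 y hy]
  change _ = (if s = t then (1 : ℝ) else 0) - (1 / 3) * Q s t / ‖y‖ ^ 4
  simp only [hL]
  rw [hsum, hform', horth', hcdef]
  field_simp
end
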